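/- The exceptional Lie algebra e₆(ℂ) of type E₆ over ℂ has dimension 78 as a complex vector space; equivalently, the adjoint representation of e₆(ℂ) is 78-dimensional. -/

import Mathlib

/-- Elements `h i`, `e i`, `f i` of a Lie algebra satisfying the Serre relations of a simply laced
Cartan matrix `A`. -/
structure IsSerreSystem {ι L : Type*} [LieRing L] (A : Matrix ι ι ℤ) (h e f : ι → L) : Prop where
  lie_h_h : ∀ i j, ⁅h i, h j⁆ = 0
  lie_e_f_same : ∀ i, ⁅e i, f i⁆ = h i
  lie_e_f_ne : ∀ i j, i ≠ j → ⁅e i, f j⁆ = 0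
  lie_h_e : ∀ i j, ⁅h i, e j⁆ = A i j • e j
  lie_h_f : ∀ i j, ⁅h i, f j⁆ = -(A i j • f j)
  lie_e_e : ∀ i j, A i j = 0 → ⁅e i, e j⁆ = 0
  lie_f_f : ∀ i j, A i j = 0 → ⁅f i, f j⁆ = 0
  lie_e_e_e : ∀ i j, A i j = -1 → ⁅e i, ⁅e i, e j⁆⁆ = 0
  lie_f_f_f : ∀ i j, A i j = -1 → ⁅f i, ⁅f i, f j⁆⁆ = 0

/-- `Φ` behaves like the set of positive roots of the simply laced Cartan matrix `A`, each root
being given by its coordinates in the basis of simple roots. -/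
structure IsSimplyLacedPosRoots {ι : Type*} [Fintype ι] [DecidableEq ι]
    (A : Matrix ι ι ℤ) (Φ : Finset (ι → ℤ)) : Prop where
  diag : ∀ i, A i i = 2
  symm : ∀ i j, A i j = A j i
  off_diag : ∀ i j, i ≠ j → A i j = 0 ∨ A i j = -1
  single_mem : ∀ i, Pi.single i 1 ∈ Φ
  height_pos : ∀ β ∈ Φ, 0 < ∑ i, β i
  pairing : ∀ β ∈ Φ, ∀ i, ((A.mulVec β) i = 2 ∧ β = Pi.single i 1) ∨
    ((A.mulVec β) i = 1 ∧ β - Pi.single i 1 ∈ Φ) ∨ (A.mulVec β) i = 0 ∨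
    ((A.mulVec β) i = -1 ∧ β + Pi.single i 1 ∈ Φ)
  exists_pairing_pos : ∀ β ∈ Φ, ∃ i, 0 < (A.mulVec β) i

/-- `IsRootVector A e β x` says that `x` is an iterated bracket `⁅e i₁, ⁅e i₂, … e iₙ⁆⁆` of weight
`β`, obtained from a simple root by adding one simple root at a time, each time along a root string
of length one. -/
inductive IsRootVector {ι L : Type*} [Fintype ι] [DecidableEq ι] [LieRing L]
    (A : Matrix ι ι ℤ) (e : ι → L) : (ι → ℤ) → L → Prop
  | simple (i : ι) : IsRootVector A e (Pi.single i 1) (e i)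
  | step (i : ι) (β : ι → ℤ) (x : L) (hx : IsRootVector A e β x) (hi : (A.mulVec β) i = -1) :
      IsRootVector A e (β + Pi.single i 1) ⁅e i, x⁆

section LieIdentities

variable {L : Type*} [LieRing L]

theorem lie_lie_comm_of_lie_eq_zero {a b : L} (hab : ⁅a, b⁆ = 0) (x : L) :
    ⁅a, ⁅b, x⁆⁆ = ⁅b, ⁅a, x⁆⁆ := by
  rw [leibniz_lie, hab, zero_lie, zero_add]

theorem lie_lie_lie_of_lie_lie_eq_zero {a b : L} (hab : ⁅a, ⁅a, b⁆⁆ = 0) (x : L) :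
    ⁅a, ⁅a, ⁅b, x⁆⁆⁆ + ⁅b, ⁅a, ⁅a, x⁆⁆⁆ = 2 • ⁅a, ⁅b, ⁅a, x⁆⁆⁆ := by
  have key : ⁅⁅a, ⁅a, b⁆⁆, x⁆ = 0 := by rw [hab, zero_lie]
  simp only [lie_lie, lie_sub] at key
  rw [two_nsmul, ← sub_eq_zero, ← key]
  abel

end LieIdentities

namespace IsSimplyLacedPosRoots

variable {ι : Type*} [Fintype ι] [DecidableEq ι] {A : Matrix ι ι ℤ} {Φ : Finset (ι → ℤ)}

theorem mulVec_add_single (β : ι → ℤ) (i j : ι) :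
    (A.mulVec (β + Pi.single i 1)) j = (A.mulVec β) j + A j i := by
  simp [Matrix.mulVec_add]

theorem sum_add_single (β : ι → ℤ) (i : ι) :
    ∑ j, (β + Pi.single i 1 : ι → ℤ) j = ∑ j, β j + 1 := by
  simp [Finset.sum_add_distrib]

theorem add_single_mem (hΦ : IsSimplyLacedPosRoots A Φ) {β : ι → ℤ} (hβ : β ∈ Φ) {i : ι}
    (hi : (A.mulVec β) i = -1) : β + Pi.single i 1 ∈ Φ := by
  rcases hΦ.pairing β hβ i with h | h | h | h <;> first | exact h.2 | omega

theorem exists_eq_add_single (hΦ : IsSimplyLacedPosRoots A Φ) {β : ι → ℤ} (hβ : β ∈ Φ) {i : ι}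
    (hi : (A.mulVec β) i = 1) :
    ∃ γ ∈ Φ, (A.mulVec γ) i = -1 ∧ β = γ + Pi.single i 1 := by
  rcases hΦ.pairing β hβ i with h | h | h | h
  · omega
  · refine ⟨_, h.2, ?_, by simp⟩
    have := mulVec_add_single (A := A) (β - Pi.single i 1) i i
    rw [sub_add_cancel, hΦ.diag] at this
    omega
  · omega
  · omega

theorem eq_single (hΦ : IsSimplyLacedPosRoots A Φ) {β : ι → ℤ} (hβ : β ∈ Φ) {i : ι}
    (hi : (A.mulVec β) i = 2) : β = Pi.single i 1 := by
  rcases hΦ.pairing β hβ i with h | h | h | h <;> first | exact h.2 | omega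

theorem mulVec_cases (hΦ : IsSimplyLacedPosRoots A Φ) {β : ι → ℤ} (hβ : β ∈ Φ) (i : ι) :
    (A.mulVec β) i = 2 ∨ (A.mulVec β) i = 1 ∨ (A.mulVec β) i = 0 ∨ (A.mulVec β) i = -1 := by
  rcases hΦ.pairing β hβ i with h | h | h | h <;> omega

end IsSimplyLacedPosRoots

namespace IsRootVector

open IsSimplyLacedPosRoots

variable {ι L : Type*} [Fintype ι] [DecidableEq ι] [LieRing L] {A : Matrix ι ι ℤ}
  {Φ : Finset (ι → ℤ)} {h e f : ι → L} {β : ι → ℤ} {x y : L}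

theorem mem (hΦ : IsSimplyLacedPosRoots A Φ) (hx : IsRootVector A e β x) : β ∈ Φ := by
  induction hx with
  | simple i => exact hΦ.single_mem i
  | step i β x _ hi ih => exact hΦ.add_single_mem ih hi

theorem eq_of_single (hΦ : IsSimplyLacedPosRoots A Φ) {i : ι}
    (hx : IsRootVector A e (Pi.single i 1) x) : x = e i := by
  generalize hβ : (Pi.single i 1 : ι → ℤ) = β at hx
  cases hx with
  | simple j =>
    have := congrFun hβ i
    by_cases hij : i = j
    · rw [hij]
    · simp [hij] at this
  | step j γ y hy hj =>
    have hpos := hΦ.height_pos γ (hy.mem hΦ)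
    have hsum := sum_add_single γ j
    rw [← hβ] at hsum
    simp at hsum
    omega

theorem exists_of_mem (hΦ : IsSimplyLacedPosRoots A Φ) (e : ι → L) (hβ : β ∈ Φ) :
    ∃ x, IsRootVector A e β x := by
  obtain ⟨n, hn⟩ := Int.eq_ofNat_of_zero_le (hΦ.height_pos β hβ).le
  induction n generalizing β with
  | zero => exact absurd (hΦ.height_pos β hβ) (by simp [hn])
  | succ n ih =>
    obtain ⟨i, hi⟩ := hΦ.exists_pairing_pos β hβ
    rcases hΦ.mulVec_cases hβ i with h2 | h1 | h0 | h0
    · rw [hΦ.eq_single hβ h2]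
      exact ⟨_, .simple i⟩
    · obtain ⟨γ, hγ, hγi, rfl⟩ := hΦ.exists_eq_add_single hβ h1
      rw [sum_add_single] at hn
      obtain ⟨x, hx⟩ := ih hγ (by push_cast at hn; omega)
      exact ⟨_, .step i γ x hx hγi⟩
    · omega
    · omega

/-- Root vectors are unique up to sign, and are annihilated by `e j` whenever adding the `j`-th
simple root leaves the set of roots. -/
theorem unique_and_lie_eq_zero [IsAddTorsionFree L] (hΦ : IsSimplyLacedPosRoots A Φ)
    (hS : IsSerreSystem A h e f) (n : ℕ) : ∀ β ∈ Φ, ∑ i, β i ≤ n →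
      (∀ x y, IsRootVector A e β x → IsRootVector A e β y → y = x ∨ y = -x) ∧
      (∀ x j, IsRootVector A e β x → 0 ≤ (A.mulVec β) j → ⁅e j, x⁆ = 0) := by
  induction n with
  | zero => exact fun β hβ hn ↦ absurd (hΦ.height_pos β hβ) (by simpa using hn)
  | succ n ih =>
  intro β hβ hn
  have unique : ∀ x y, IsRootVector A e β x → IsRootVector A e β y → y = x ∨ y = -x := by
    intro x y hx hy
    cases hx with
    | simple i => exact .inl (hy.eq_of_single hΦ)
    | step i γ u hu hγi =>
    have hγ := hu.mem hΦ
    have hγn : ∑ j, γ j ≤ n := by rw [sum_add_single] at hn; push_cast at hn; omega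
    generalize hβ' : γ + Pi.single i 1 = β' at hy
    cases hy with
    | simple k =>
      have hx := IsRootVector.step i γ u hu hγi
      rw [hβ'] at hx
      exact .inl (hx.eq_of_single hΦ).symm
    | step k γ' u' hu' hγk =>
    by_cases hik : i = k
    · subst hik
      obtain rfl := add_right_cancel hβ'
      rcases (ih γ hγ hγn).1 u u' hu hu' with rfl | rfl <;> simp
    · have hγk' := mulVec_add_single (A := A) γ' k k
      rw [← hβ', mulVec_add_single, hγk, hΦ.diag] at hγk'
      have hγi' := mulVec_add_single (A := A) γ i i
      rw [hβ', mulVec_add_single, hγi, hΦ.diag] at hγi'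
      have hki : A k i = A i k := hΦ.symm k i
      rcases hΦ.off_diag i k hik with h0 | h1
      · obtain ⟨δ, hδ, hδk, rfl⟩ := hΦ.exists_eq_add_single hγ (i := k) (by omega)
        have hγ' : γ' = δ + Pi.single i 1 := by
          rw [add_right_comm] at hβ'; exact (add_right_cancel hβ').symm
        subst hγ'
        rw [mulVec_add_single] at hγi
        obtain ⟨v, hv⟩ := exists_of_mem hΦ e hδ
        have hn' : ∑ j, (δ + Pi.single i 1 : ι → ℤ) j ≤ n := by
          rw [sum_add_single] at hγn ⊢; exact hγn
        have hc := lie_lie_comm_of_lie_eq_zero (hS.lie_e_e i k h0) v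
        rcases (ih _ hγ hγn).1 _ _ hu (.step k δ v hv hδk) with h1 | h1 <;>
        rcases (ih _ (hu'.mem hΦ) hn').1 _ _ hu' (.step i δ v hv (by omega)) with h2 | h2 <;>
        simp only [h1, h2, lie_neg, neg_inj] at hc <;>
        first
        | exact .inl hc.symm
        | exact .inr hc.symm
        | exact .inr (by rw [hc, neg_neg])
      · have hγ2 := hΦ.eq_single hγ (i := k) (by omega)
        have hγ2' := hΦ.eq_single (hu'.mem hΦ) (i := i) (by omega)
        subst hγ2 hγ2'
        rw [hu.eq_of_single hΦ, hu'.eq_of_single hΦ]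
        exact .inr (lie_skew _ _).symm
  refine ⟨unique, fun x j hx hj ↦ ?_⟩
  rcases hΦ.mulVec_cases hβ j with h2 | h1 | h0 | hneg
  · obtain rfl := hΦ.eq_single hβ h2
    rw [hx.eq_of_single hΦ, lie_self]
  · obtain ⟨γ, hγ, hγj, rfl⟩ := hΦ.exists_eq_add_single hβ h1
    obtain ⟨u, hu⟩ := exists_of_mem hΦ e hγ
    rw [sum_add_single] at hn
    suffices hz : ⁅e j, ⁅e j, u⁆⁆ = 0 by
      rcases unique _ _ (.step j γ u hu hγj) hx with rfl | rfl <;> simp only [lie_neg, hz, neg_zero]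
    cases hu with
    | simple i => exact hS.lie_e_e_e j i (by simpa using hγj)
    | step i δ v hv hδi =>
    have hij : j ≠ i := by
      rintro rfl
      rw [mulVec_add_single, hΦ.diag] at hγj
      omega
    rw [mulVec_add_single] at hγj
    rw [sum_add_single] at hn
    push_cast at hn
    have hδ := hv.mem hΦ
    rcases hΦ.off_diag j i hij with h0 | h1
    · have hδj : (A.mulVec δ) j = -1 := by omega
      have hc := lie_lie_comm_of_lie_eq_zero (hS.lie_e_e j i h0)
      rw [hc, hc, (ih _ (hΦ.add_single_mem hδ hδj) (by rw [sum_add_single]; omega)).2 _ _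
        (.step j δ v hv hδj) (by rw [mulVec_add_single, hΦ.diag]; omega), lie_zero]
    · have hz := (ih δ hδ (by omega)).2 v j hv (by omega)
      simpa [hz] using lie_lie_lie_of_lie_lie_eq_zero (hS.lie_e_e_e j i h1) v
  · cases hx with
    | simple i => exact hS.lie_e_e j i (by simpa using h0)
    | step i γ u hu hγi =>
    have hij : j ≠ i := by
      rintro rfl
      rw [mulVec_add_single, hΦ.diag] at h0
      omega
    rw [mulVec_add_single] at h0
    rw [sum_add_single] at hn
    push_cast at hn
    have hγ := hu.mem hΦ
    rcases hΦ.off_diag j i hij with hA | hA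
    · rw [lie_lie_comm_of_lie_eq_zero (hS.lie_e_e j i hA),
        (ih γ hγ (by omega)).2 u j hu (by omega), lie_zero]
    · obtain ⟨δ, hδ, hδj, rfl⟩ := hΦ.exists_eq_add_single hγ (i := j) (by omega)
      obtain ⟨v, hv⟩ := exists_of_mem hΦ e hδ
      have hv' := IsRootVector.step j δ v hv hδj
      have hsum := sum_add_single δ j
      have hAij := hΦ.symm i j
      rw [mulVec_add_single] at hγi
      have hi := (ih δ hδ (by omega)).2 v i hv (by omega)
      have hj := (ih _ hγ (by omega)).2 _ j hv' (by omega)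
      have hz := lie_lie_lie_of_lie_lie_eq_zero (hS.lie_e_e_e j i hA) v
      rw [hi, hj, lie_zero, lie_zero, lie_zero, add_zero, eq_comm,
        nsmul_eq_zero_iff_right two_ne_zero] at hz
      rcases (ih _ hγ (by omega)).1 _ _ hv' hu with rfl | rfl <;>
        simp only [lie_neg, hz, neg_zero]
  · omega

theorem eq_or_eq_neg [IsAddTorsionFree L] (hΦ : IsSimplyLacedPosRoots A Φ)
    (hS : IsSerreSystem A h e f) (hx : IsRootVector A e β x) (hy : IsRootVector A e β y) :
    y = x ∨ y = -x :=
  (unique_and_lie_eq_zero hΦ hS (∑ i, β i).toNat β (hx.mem hΦ) (Int.self_le_toNat _)).1 x y hx hy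

theorem lie_eq_zero [IsAddTorsionFree L] (hΦ : IsSimplyLacedPosRoots A Φ)
    (hS : IsSerreSystem A h e f) (hx : IsRootVector A e β x) {j : ι}
    (hj : 0 ≤ (A.mulVec β) j) : ⁅e j, x⁆ = 0 :=
  (unique_and_lie_eq_zero hΦ hS (∑ i, β i).toNat β (hx.mem hΦ) (Int.self_le_toNat _)).2 x j hx hj

theorem lie_h (hS : IsSerreSystem A h e f) (hx : IsRootVector A e β x) (j : ι) :
    ⁅h j, x⁆ = (A.mulVec β) j • x := by
  induction hx with
  | simple i => simpa using hS.lie_h_e j i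
  | step i γ u hu hi ih =>
    rw [leibniz_lie, hS.lie_h_e, ih, mulVec_add_single, smul_lie, lie_smul, ← add_smul, add_comm]

end IsRootVector

namespace IsSerreSystem

/-- The Chevalley involution on Serre systems. -/
theorem swap {ι L : Type*} [LieRing L] {A : Matrix ι ι ℤ} {h e f : ι → L}
    (hS : IsSerreSystem A h e f) : IsSerreSystem A (-h) f e where
  lie_h_h i j := by simp [hS.lie_h_h]
  lie_e_f_same i := by rw [← lie_skew, hS.lie_e_f_same, Pi.neg_apply]
  lie_e_f_ne i j hij := by rw [← lie_skew, hS.lie_e_f_ne j i hij.symm, neg_zero]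
  lie_h_e i j := by rw [Pi.neg_apply, neg_lie, hS.lie_h_f, neg_neg]
  lie_h_f i j := by rw [Pi.neg_apply, neg_lie, hS.lie_h_e]
  lie_e_e := hS.lie_f_f
  lie_f_f := hS.lie_e_e
  lie_e_e_e := hS.lie_f_f_f
  lie_f_f_f := hS.lie_e_e_e

variable {ι K L : Type*} [Fintype ι] [DecidableEq ι] [Field K] [LieRing L] [LieAlgebra K L]
  {A : Matrix ι ι ℤ} {Φ : Finset (ι → ℤ)} {h e f : ι → L}

variable (K A h e) in
/-- The span of the Cartan elements and the positive root vectors. -/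
def borel : Submodule K L :=
  Submodule.span K (Set.range h ∪ {x | ∃ β, IsRootVector A e β x})

theorem h_mem_borel (i : ι) : h i ∈ borel K A h e :=
  Submodule.subset_span (.inl ⟨i, rfl⟩)

theorem rootVector_mem_borel {β : ι → ℤ} {x : L} (hx : IsRootVector A e β x) :
    x ∈ borel K A h e :=
  Submodule.subset_span (.inr ⟨β, hx⟩)

theorem lie_e_mem_borel [IsAddTorsionFree L] (hΦ : IsSimplyLacedPosRoots A Φ)
    (hS : IsSerreSystem A h e f) (j : ι) {z : L} (hz : z ∈ borel K A h e) :
    ⁅e j, z⁆ ∈ borel K A h e := by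
  induction hz using Submodule.span_induction with
  | mem z hz =>
    rcases hz with ⟨i, rfl⟩ | ⟨β, hx⟩
    · rw [← lie_skew, hS.lie_h_e]
      exact neg_mem (zsmul_mem (rootVector_mem_borel (.simple j)) _)
    · by_cases hj : (A.mulVec β) j = -1
      · exact rootVector_mem_borel (hx.step j β z hj)
      · have := hΦ.mulVec_cases (hx.mem hΦ) j
        rw [hx.lie_eq_zero hΦ hS (by omega)]
        exact zero_mem _
  | zero => simp
  | add x y _ _ hx hy => rw [lie_add]; exact add_mem hx hy
  | smul a x _ hx => rw [lie_smul]; exact Submodule.smul_mem _ _ hx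

theorem lie_f_mem_borel [IsAddTorsionFree L] (hΦ : IsSimplyLacedPosRoots A Φ)
    (hS : IsSerreSystem A h e f) (j : ι) {β : ι → ℤ} {x : L} (hx : IsRootVector A e β x) :
    ⁅f j, x⁆ ∈ borel K A h e := by
  have hfe (i : ι) : ⁅f j, e i⁆ = if i = j then -h i else 0 := by
    rw [← lie_skew]
    split_ifs with hij
    · rw [hij, hS.lie_e_f_same]
    · rw [hS.lie_e_f_ne i j hij, neg_zero]
  induction hx with
  | simple i =>
    rw [hfe]
    split_ifs
    · exact neg_mem (h_mem_borel i)
    · exact zero_mem _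
  | step i γ u hu hi ih =>
    rw [leibniz_lie, hfe]
    refine add_mem ?_ (lie_e_mem_borel hΦ hS i ih)
    split_ifs
    · rw [neg_lie, hu.lie_h hS]
      exact neg_mem (zsmul_mem (rootVector_mem_borel hu) _)
    · rw [zero_lie]
      exact zero_mem _

theorem lie_e_mem_borel_sup [IsAddTorsionFree L] (hΦ : IsSimplyLacedPosRoots A Φ)
    (hS : IsSerreSystem A h e f) (j : ι) {z : L} (hz : z ∈ borel K A h e ⊔ borel K A (-h) f) :
    ⁅e j, z⁆ ∈ borel K A h e ⊔ borel K A (-h) f := by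
  obtain ⟨u, hu, v, hv, rfl⟩ := Submodule.mem_sup.1 hz
  rw [lie_add]
  refine add_mem (Submodule.mem_sup_left (lie_e_mem_borel hΦ hS j hu)) ?_
  induction hv using Submodule.span_induction with
  | mem y hy =>
    rcases hy with ⟨i, rfl⟩ | ⟨β, hy⟩
    · refine Submodule.mem_sup_left (lie_e_mem_borel hΦ hS j ?_)
      exact neg_mem (h_mem_borel i)
    · exact Submodule.mem_sup_right (lie_f_mem_borel hΦ hS.swap j hy)
  | zero => simp
  | add x y _ _ hx hy =>
    rw [lie_add]
    exact add_mem (hx (Submodule.add_mem_sup hu ‹_›)) (hy (Submodule.add_mem_sup hu ‹_›))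
  | smul a x _ hx =>
    rw [lie_smul]
    exact Submodule.smul_mem _ _ (hx (Submodule.add_mem_sup hu ‹_›))

theorem borel_sup_eq_top [IsAddTorsionFree L] (hΦ : IsSimplyLacedPosRoots A Φ)
    (hS : IsSerreSystem A h e f)
    (hgen : ∀ N : LieSubalgebra K L, (∀ i, e i ∈ N) → (∀ i, f i ∈ N) → N = ⊤) :
    borel K A h e ⊔ borel K A (-h) f = ⊤ := by
  set S := borel K A h e ⊔ borel K A (-h) f with hSdef
  let N : LieSubalgebra K L :=
    { carrier := {z | ∀ s ∈ S, ⁅z, s⁆ ∈ S}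
      add_mem' := fun ha hb s hs ↦ by rw [add_lie]; exact add_mem (ha s hs) (hb s hs)
      zero_mem' := fun s _ ↦ by simp
      smul_mem' := fun c z hz s hs ↦ by rw [smul_lie]; exact S.smul_mem c (hz s hs)
      lie_mem' := fun ha hb s hs ↦ by
        rw [lie_lie]
        exact sub_mem (ha _ (hb s hs)) (hb _ (ha s hs)) }
  have hN : N = ⊤ := by
    refine hgen N (fun i s hs ↦ lie_e_mem_borel_sup hΦ hS i hs) (fun i s hs ↦ ?_)
    have := lie_e_mem_borel_sup (K := K) hΦ hS.swap i (z := s)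
    rw [neg_neg, sup_comm] at this
    exact this hs
  let T : LieSubalgebra K L :=
    { S with
      lie_mem' := fun {a b} _ hb ↦ (hN ▸ LieSubalgebra.mem_top a : a ∈ N) b hb }
  have hT : T = ⊤ := hgen T
    (fun i ↦ Submodule.mem_sup_left (rootVector_mem_borel (.simple i)))
    (fun i ↦ Submodule.mem_sup_right (rootVector_mem_borel (.simple i)))
  exact eq_top_iff.2 fun z _ ↦ (show z ∈ T by rw [hT]; exact LieSubalgebra.mem_top _)

theorem borel_le_span [IsAddTorsionFree L] (hΦ : IsSimplyLacedPosRoots A Φ)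
    (hS : IsSerreSystem A h e f) {x : Φ → L} (hx : ∀ β : Φ, IsRootVector A e β (x β)) :
    borel K A h e ≤ Submodule.span K (Set.range h ∪ Set.range x) := by
  refine Submodule.span_le.2 ?_
  rintro z (hz | ⟨β, hz⟩)
  · exact Submodule.subset_span (.inl hz)
  · have hmem : x ⟨β, hz.mem hΦ⟩ ∈ Submodule.span K (Set.range h ∪ Set.range x) :=
      Submodule.subset_span (.inr ⟨_, rfl⟩)
    rcases (hx ⟨β, hz.mem hΦ⟩).eq_or_eq_neg hΦ hS hz with hzx | hzx
    · rw [hzx]; exact hmem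
    · rw [hzx]; exact neg_mem hmem

theorem isSl2Triple [IsAddTorsionFree L] (hΦ : IsSimplyLacedPosRoots A Φ)
    (hS : IsSerreSystem A h e f)
    {i : ι} (hi : e i ≠ 0) : IsSl2Triple (h i) (e i) (f i) where
  h_ne_zero h0 := by
    have h2 := hS.lie_h_e i i
    rw [h0, zero_lie, hΦ.diag, eq_comm, ofNat_zsmul] at h2
    exact hi ((nsmul_eq_zero_iff_right two_ne_zero).1 h2)
  lie_e_f := hS.lie_e_f_same i
  lie_h_e_nsmul := by rw [hS.lie_h_e, hΦ.diag, ofNat_zsmul]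
  lie_h_f_nsmul := by rw [hS.lie_h_f, hΦ.diag, ofNat_zsmul]

theorem rootVector_ne_zero [CharZero K] [IsAddTorsionFree L] [Module.Finite K L]
    (hΦ : IsSimplyLacedPosRoots A Φ)
    (hS : IsSerreSystem A h e f) (he : ∀ i, e i ≠ 0) {β : ι → ℤ} {x : L}
    (hx : IsRootVector A e β x) : x ≠ 0 := by
  induction hx with
  | simple i => exact he i
  | step i γ u hu hi ih =>
    intro h0
    have P : (hS.isSl2Triple hΦ (he i)).HasPrimitiveVectorWith u (-1 : K) :=
      ⟨ih, by rw [hu.lie_h hS, hi]; simp, h0⟩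
    obtain ⟨n, hn⟩ := P.exists_nat
    have : ((n + 1 : ℕ) : K) = 0 := by push_cast; rw [← hn]; ring
    exact Nat.cast_ne_zero.2 n.succ_ne_zero this

theorem linearIndependent_h [CharZero K] (hS : IsSerreSystem A h e f) (he : ∀ i, e i ≠ 0)
    (hA : A.det ≠ 0) : LinearIndependent K h := by
  rw [Fintype.linearIndependent_iff]
  intro g hg
  refine congrFun (Matrix.eq_zero_of_vecMul_eq_zero (M := A.map (Int.cast : ℤ → K)) ?_ ?_)
  · have : (A.map (Int.cast : ℤ → K)).det = ((A.det : ℤ) : K) :=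
      ((Int.castRingHom K).map_det A).symm
    rw [this]
    exact_mod_cast hA
  · ext j
    have hj : ⁅∑ i, g i • h i, e j⁆ = 0 := by rw [hg, zero_lie]
    simp only [sum_lie, smul_lie, hS.lie_h_e, ← Int.cast_smul_eq_zsmul K, smul_smul,
      ← Finset.sum_smul] at hj
    simpa [Matrix.vecMul, dotProduct] using (smul_eq_zero.1 hj).resolve_right (he j)

/-- The dimension of a simply laced Lie algebra generated by a Serre system. The integral weights
`c` define a Cartan element which separates the roots. -/
theorem finrank_eq [CharZero K] (hΦ : IsSimplyLacedPosRoots A Φ) (hS : IsSerreSystem A h e f)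
    (hgen : ∀ N : LieSubalgebra K L, (∀ i, e i ∈ N) → (∀ i, f i ∈ N) → N = ⊤)
    (he : ∀ i, e i ≠ 0) (hf : ∀ i, f i ≠ 0) (hA : A.det ≠ 0) (c : ι → ℤ)
    (hc_pos : ∀ β ∈ Φ, 0 < c ⬝ᵥ A.mulVec β)
    (hc_inj : Set.InjOn (fun β ↦ c ⬝ᵥ A.mulVec β) Φ) :
    Module.finrank K L = Fintype.card ι + (Φ.card + Φ.card) := by
  have : IsAddTorsionFree L := .of_isTorsionFree K L
  choose x hx using fun β : Φ ↦ IsRootVector.exists_of_mem hΦ e β.2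
  choose y hy using fun β : Φ ↦ IsRootVector.exists_of_mem hΦ f β.2
  let v : ι ⊕ (Φ ⊕ Φ) → L := Sum.elim h (Sum.elim x y)
  have hspan : ⊤ ≤ Submodule.span K (Set.range v) := by
    rw [← hS.borel_sup_eq_top hΦ hgen]
    have hr : Set.range v = Set.range h ∪ (Set.range x ∪ Set.range y) := by
      simp [v, Set.Sum.elim_range]
    refine sup_le ((hS.borel_le_span hΦ hx).trans (Submodule.span_mono ?_))
      ((hS.swap.borel_le_span hΦ hy).trans (Submodule.span_le.2 ?_))
    · rw [hr]; exact Set.union_subset_union_right _ Set.subset_union_left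
    · rintro z (⟨i, rfl⟩ | hz)
      · exact neg_mem (Submodule.subset_span (hr ▸ .inl ⟨i, rfl⟩))
      · exact Submodule.subset_span (hr ▸ .inr (.inr hz))
  have : Module.Finite K L := ⟨top_le_iff.1 hspan ▸ Submodule.fg_span (Set.finite_range v)⟩
  let D : Module.End K L := LieAlgebra.ad K L (∑ i, (c i : K) • h i)
  let d : Φ ⊕ Φ → K := Sum.elim (fun β ↦ ((c ⬝ᵥ A.mulVec β : ℤ) : K))
    (fun β ↦ ((-(c ⬝ᵥ A.mulVec β) : ℤ) : K))
  have hDh (i : ι) : D (h i) = 0 := by simp [D, hS.lie_h_h]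
  have hDx (β : Φ) : D (x β) = d (.inl β) • x β := by
    simp [D, d, (hx β).lie_h hS, dotProduct, ← Int.cast_smul_eq_zsmul K,
      smul_smul, Finset.sum_smul]
  have hDy (β : Φ) : D (y β) = d (.inr β) • y β := by
    have hhy (i : ι) : ⁅h i, y β⁆ = -((A.mulVec β) i • y β) := by
      rw [← (hy β).lie_h hS.swap i, Pi.neg_apply, neg_lie, neg_neg]
    simp [D, d, hhy, dotProduct, ← Int.cast_smul_eq_zsmul K,
      smul_smul, Finset.sum_smul]
  have hd_inj : Function.Injective d := by
    rintro (β | β) (γ | γ) hβγ <;> simp only [d, Sum.elim_inl, Sum.elim_inr, Int.cast_inj] at hβγ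
    · exact congrArg _ (Subtype.ext (hc_inj β.2 γ.2 hβγ))
    · have := hc_pos β β.2; have := hc_pos γ γ.2; omega
    · have := hc_pos β β.2; have := hc_pos γ γ.2; omega
    · exact congrArg _ (Subtype.ext (hc_inj β.2 γ.2 (neg_injective hβγ)))
  have hd_ne (k : Φ ⊕ Φ) : d k ≠ 0 := by
    rcases k with β | β <;> simpa [d] using (hc_pos β β.2).ne'
  have heig (k : Φ ⊕ Φ) : D.HasEigenvector (d k) (Sum.elim x y k) := by
    rcases k with β | β
    · exact ⟨Module.End.mem_eigenspace_iff.2 (hDx β), hS.rootVector_ne_zero (K := K) hΦ he (hx β)⟩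
    · exact ⟨Module.End.mem_eigenspace_iff.2 (hDy β),
        hS.swap.rootVector_ne_zero (K := K) hΦ hf (hy β)⟩
  have hli : LinearIndependent K v := by
    refine (hS.linearIndependent_h he hA).sum_type
      (D.eigenvectors_linearIndependent' d hd_inj _ heig) ?_
    refine (D.eigenspaces_iSupIndep 0).mono (Submodule.span_le.2 ?_) (Submodule.span_le.2 ?_)
    · rintro _ ⟨i, rfl⟩
      exact Module.End.mem_eigenspace_iff.2 (by rw [hDh, zero_smul])
    · rintro _ ⟨k, rfl⟩
      exact Submodule.mem_iSup_of_mem (d k) (Submodule.mem_iSup_of_mem (hd_ne k) (heig k).1)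
  rw [Module.finrank_eq_card_basis (Module.Basis.mk hli hspan)]
  simp

end IsSerreSystem

namespace Matrix.ToLieAlgebra

open CartanMatrix

variable (R : Type*) {B : Type*} [CommRing R] [DecidableEq B] (A : Matrix B B ℤ)

/-- The projection from the free Lie algebra onto the Lie algebra of a Cartan matrix. -/
noncomputable def proj : FreeLieAlgebra R (Generators B) →ₗ⁅R⁆ A.ToLieAlgebra R where
  toFun x := (LieSubmodule.Quotient.mk x :
    FreeLieAlgebra R (Generators B) ⧸ Relations.toIdeal R A)
  map_add' _ _ := rfl
  map_smul' _ _ := rfl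
  map_lie' := rfl

theorem proj_surjective : Function.Surjective (proj R A) :=
  LieSubmodule.Quotient.surjective_mk' (Relations.toIdeal R A)

theorem proj_eq_zero_iff {x : FreeLieAlgebra R (Generators B)} :
    proj R A x = 0 ↔ x ∈ Relations.toIdeal R A :=
  LieSubmodule.Quotient.mk_eq_zero' (N := Relations.toIdeal R A)

theorem proj_eq_zero {x : FreeLieAlgebra R (Generators B)} (hx : x ∈ Relations.toSet R A) :
    proj R A x = 0 :=
  (proj_eq_zero_iff R A).2 (LieSubmodule.subset_lieSpan hx)

/-- The Cartan generators. -/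
noncomputable def H (i : B) : A.ToLieAlgebra R := proj R A (FreeLieAlgebra.of R (.H i))

/-- The positive Chevalley generators. -/
noncomputable def E (i : B) : A.ToLieAlgebra R := proj R A (FreeLieAlgebra.of R (.E i))

/-- The negative Chevalley generators. -/
noncomputable def F (i : B) : A.ToLieAlgebra R := proj R A (FreeLieAlgebra.of R (.F i))

theorem isSerreSystem : IsSerreSystem A (H R A) (E R A) (F R A) where
  lie_h_h i j := by
    simpa [H, Relations.HH] using
      proj_eq_zero R A (x := Relations.HH R (i, j)) (by simp [Relations.toSet])
  lie_e_f_same i := by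
    simpa [H, E, F, Relations.EF, sub_eq_zero] using
      proj_eq_zero R A (x := Relations.EF R (i, i)) (by simp [Relations.toSet])
  lie_e_f_ne i j hij := by
    simpa [E, F, Relations.EF, hij] using
      proj_eq_zero R A (x := Relations.EF R (i, j)) (by simp [Relations.toSet])
  lie_h_e i j := by
    simpa [H, E, Relations.HE, sub_eq_zero] using
      proj_eq_zero R A (x := Relations.HE R A (i, j)) (by simp [Relations.toSet])
  lie_h_f i j := by
    simpa [H, F, Relations.HF, add_eq_zero_iff_eq_neg] using
      proj_eq_zero R A (x := Relations.HF R A (i, j)) (by simp [Relations.toSet])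
  lie_e_e i j hij := by
    simpa [E, Relations.adE, hij] using
      proj_eq_zero R A (x := Relations.adE R A (i, j)) (by simp [Relations.toSet])
  lie_f_f i j hij := by
    simpa [F, Relations.adF, hij] using
      proj_eq_zero R A (x := Relations.adF R A (i, j)) (by simp [Relations.toSet])
  lie_e_e_e i j hij := by
    simpa [E, Relations.adE, hij] using
      proj_eq_zero R A (x := Relations.adE R A (i, j)) (by simp [Relations.toSet])
  lie_f_f_f i j hij := by
    simpa [F, Relations.adF, hij] using
      proj_eq_zero R A (x := Relations.adF R A (i, j)) (by simp [Relations.toSet])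

theorem eq_top_of_mem (N : LieSubalgebra R (A.ToLieAlgebra R)) (hE : ∀ i, E R A i ∈ N)
    (hF : ∀ i, F R A i ∈ N) : N = ⊤ := by
  have hN : ∀ g : Generators B, proj R A (FreeLieAlgebra.of R g) ∈ N
    | .H i => by
      have := N.lie_mem (hE i) (hF i)
      rwa [(isSerreSystem R A).lie_e_f_same] at this
    | .E i => hE i
    | .F i => hF i
  let φ : FreeLieAlgebra R (Generators B) →ₗ⁅R⁆ N := FreeLieAlgebra.lift R fun g ↦ ⟨_, hN g⟩
  have hφ : N.incl.comp φ = proj R A := by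
    ext g
    simp [φ]
  refine eq_top_iff.2 fun z _ ↦ ?_
  obtain ⟨x, rfl⟩ := proj_surjective R A z
  rw [← hφ]
  exact (φ x).2

/-- A Serre system in any Lie algebra yields a homomorphism on the free Lie algebra killing the
Serre relations. -/
theorem lift_eq_zero {L : Type*} [LieRing L] [LieAlgebra R L] {h e f : B → L}
    (hS : IsSerreSystem A h e f) (hdiag : ∀ i, A i i = 2) (hA : A.IsSimplyLaced)
    {x : FreeLieAlgebra R (Generators B)} (hx : x ∈ Relations.toIdeal R A) :
    FreeLieAlgebra.lift R (fun | .H i => h i | .E i => e i | .F i => f i) x = 0 := by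
  set φ : FreeLieAlgebra R (Generators B) →ₗ⁅R⁆ L :=
    FreeLieAlgebra.lift R (fun | .H i => h i | .E i => e i | .F i => f i) with hφ
  have hH (i) : φ (FreeLieAlgebra.of R (.H i)) = h i := by simp [hφ]
  have hE (i) : φ (FreeLieAlgebra.of R (.E i)) = e i := by simp [hφ]
  have hF (i) : φ (FreeLieAlgebra.of R (.F i)) = f i := by simp [hφ]
  suffices Relations.toIdeal R A ≤ φ.ker from LieHom.mem_ker.1 (this hx)
  refine LieSubmodule.lieSpan_le.2 ?_
  rintro _ (((((⟨⟨i, j⟩, rfl⟩ | ⟨⟨i, j⟩, rfl⟩) | ⟨⟨i, j⟩, rfl⟩) | ⟨⟨i, j⟩, rfl⟩) |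
    ⟨⟨i, j⟩, rfl⟩) | ⟨⟨i, j⟩, rfl⟩) <;> rw [SetLike.mem_coe, LieHom.mem_ker]
  · simp [Relations.HH, hH, hS.lie_h_h]
  · by_cases hij : i = j
    · simp [Relations.EF, hij, hE, hF, hH, hS.lie_e_f_same]
    · simp [Relations.EF, hij, hE, hF, hS.lie_e_f_ne i j hij]
  · simp [Relations.HE, hH, hE, hS.lie_h_e]
  · simp [Relations.HF, hH, hF, hS.lie_h_f]
  · by_cases hij : i = j
    · simp [Relations.adE, hij, hdiag]
    · rcases hA hij with h0 | h1
      · simp [Relations.adE, h0, hE, hS.lie_e_e i j h0]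
      · simp [Relations.adE, h1, hE, hS.lie_e_e_e i j h1]
  · by_cases hij : i = j
    · simp [Relations.adF, hij, hdiag]
    · rcases hA hij with h0 | h1
      · simp [Relations.adF, h0, hF, hS.lie_f_f i j h0]
      · simp [Relations.adF, h1, hF, hS.lie_f_f_f i j h1]

theorem E_ne_zero {L : Type*} [LieRing L] [LieAlgebra R L] {h e f : B → L}
    (hS : IsSerreSystem A h e f) (hdiag : ∀ i, A i i = 2) (hA : A.IsSimplyLaced)
    {i : B} (hi : e i ≠ 0) : E R A i ≠ 0 := fun h0 ↦
  hi (by simpa using lift_eq_zero R A hS hdiag hA ((proj_eq_zero_iff R A).1 h0))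

theorem F_ne_zero {L : Type*} [LieRing L] [LieAlgebra R L] {h e f : B → L}
    (hS : IsSerreSystem A h e f) (hdiag : ∀ i, A i i = 2) (hA : A.IsSimplyLaced)
    {i : B} (hi : f i ≠ 0) : F R A i ≠ 0 := fun h0 ↦
  hi (by simpa using lift_eq_zero R A hS hdiag hA ((proj_eq_zero_iff R A).1 h0))

end Matrix.ToLieAlgebra

namespace CartanMatrix.E₆

open Matrix

/-- The positive roots of type `E₆` in the basis of simple roots. -/
def posRootList : List (Fin 6 → ℤ) :=
  [ ![1, 0, 0, 0, 0, 0], ![0, 1, 0, 0, 0, 0], ![0, 0, 1, 0, 0, 0], ![0, 0, 0, 1, 0, 0],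
    ![0, 0, 0, 0, 1, 0], ![0, 0, 0, 0, 0, 1], ![1, 0, 1, 0, 0, 0], ![0, 1, 0, 1, 0, 0],
    ![0, 0, 1, 1, 0, 0], ![0, 0, 0, 1, 1, 0], ![0, 0, 0, 0, 1, 1], ![1, 0, 1, 1, 0, 0],
    ![0, 1, 1, 1, 0, 0], ![0, 1, 0, 1, 1, 0], ![0, 0, 1, 1, 1, 0], ![0, 0, 0, 1, 1, 1],
    ![1, 1, 1, 1, 0, 0], ![1, 0, 1, 1, 1, 0], ![0, 1, 1, 1, 1, 0], ![0, 1, 0, 1, 1, 1],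
    ![0, 0, 1, 1, 1, 1], ![1, 1, 1, 1, 1, 0], ![1, 0, 1, 1, 1, 1], ![0, 1, 1, 2, 1, 0],
    ![0, 1, 1, 1, 1, 1], ![1, 1, 1, 2, 1, 0], ![1, 1, 1, 1, 1, 1], ![0, 1, 1, 2, 1, 1],
    ![1, 1, 2, 2, 1, 0], ![1, 1, 1, 2, 1, 1], ![0, 1, 1, 2, 2, 1], ![1, 1, 2, 2, 1, 1],
    ![1, 1, 1, 2, 2, 1], ![1, 1, 2, 2, 2, 1], ![1, 1, 2, 3, 2, 1], ![1, 2, 2, 3, 2, 1]]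

/-- The finite set of positive roots of type `E₆`. -/
def posRoots : Finset (Fin 6 → ℤ) := posRootList.toFinset

theorem card_posRoots : posRoots.card = 36 :=
  List.toFinset_card_of_nodup (by decide +kernel)

theorem isSimplyLacedPosRoots : IsSimplyLacedPosRoots E₆ posRoots where
  diag := by decide +kernel
  symm i j := E₆_isSymm.apply j i
  off_diag i j hij := isSimplyLaced_E₆ hij
  single_mem := by simp only [posRoots, List.mem_toFinset]; decide +kernel
  height_pos := by simp only [posRoots, List.mem_toFinset]; decide +kernel
  pairing := by simp only [posRoots, List.mem_toFinset]; decide +kernel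
  exists_pairing_pos := by simp only [posRoots, List.mem_toFinset]; decide +kernel

/-- Coordinates of a Cartan element separating the roots of type `E₆`. -/
def separatingCoweight : Fin 6 → ℤ := ![55, 75, 102, 143, 100, 55]

theorem separatingCoweight_pos :
    ∀ β ∈ posRoots, 0 < separatingCoweight ⬝ᵥ E₆.mulVec β := by
  simp only [posRoots, List.mem_toFinset]; decide +kernel

theorem separatingCoweight_injOn :
    Set.InjOn (fun β ↦ separatingCoweight ⬝ᵥ E₆.mulVec β) posRoots := by
  have : ∀ β ∈ posRootList, ∀ γ ∈ posRootList,
      separatingCoweight ⬝ᵥ E₆.mulVec β = separatingCoweight ⬝ᵥ E₆.mulVec γ → β = γ := by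
    decide +kernel
  intro β hβ γ hγ
  exact this β (List.mem_toFinset.1 hβ) γ (List.mem_toFinset.1 hγ)

/-- The weights of the `27`-dimensional minuscule representation, in the basis of fundamental
weights. -/
def weight : Fin 27 → Fin 6 → ℤ :=
  ![![1, 0, 0, 0, 0, 0], ![-1, 0, 1, 0, 0, 0], ![0, 0, -1, 1, 0, 0], ![0, 1, 0, -1, 1, 0],
    ![0, -1, 0, 0, 1, 0], ![0, 1, 0, 0, -1, 1], ![0, -1, 0, 1, -1, 1], ![0, 1, 0, 0, 0, -1],
    ![0, 0, 1, -1, 0, 1], ![0, -1, 0, 1, 0, -1], ![1, 0, -1, 0, 0, 1], ![0, 0, 1, -1, 1, -1],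
    ![-1, 0, 0, 0, 0, 1], ![1, 0, -1, 0, 1, -1], ![0, 0, 1, 0, -1, 0], ![-1, 0, 0, 0, 1, -1],
    ![1, 0, -1, 1, -1, 0], ![-1, 0, 0, 1, -1, 0], ![1, 1, 0, -1, 0, 0], ![-1, 1, 1, -1, 0, 0],
    ![1, -1, 0, 0, 0, 0], ![-1, -1, 1, 0, 0, 0], ![0, 1, -1, 0, 0, 0], ![0, -1, -1, 1, 0, 0],
    ![0, 0, 0, -1, 1, 0], ![0, 0, 0, 0, -1, 1], ![0, 0, 0, 0, 0, -1]]

/-- Subtraction of the `i`-th simple root, as a partial bijection of the minuscule weights. -/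
def lower (i : Fin 6) : Fin 27 ≃. Fin 27 where
  toFun a := (List.finRange 27).find? fun b ↦ weight b = weight a - E₆ i
  invFun b := (List.finRange 27).find? fun a ↦ weight b = weight a - E₆ i
  inv := by decide +kernel +revert

theorem weight_of_mem_lower :
    ∀ i j, ∀ a b, b ∈ lower j a → weight a i - weight b i = E₆ i j := by
  decide +kernel

theorem exists_mem_lower : ∀ i, ∃ a b, b ∈ lower i a := by
  decide +kernel

theorem lower_trans_comm :
    ∀ i j, E₆ i j = 0 → ∀ a, (lower i).trans (lower j) a = (lower j).trans (lower i) a := by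
  intro i
  fin_cases i <;> decide +kernel

theorem lower_trans_symm_comm : ∀ i j, i ≠ j → ∀ a,
    (lower i).trans (lower j).symm a = (lower j).symm.trans (lower i) a := by
  decide +kernel

theorem lower_trans_lower : ∀ i a, (lower i).trans (lower i) a = none := by
  decide +kernel

theorem lower_trans_lower_trans_lower : ∀ i j, E₆ i j = -1 → ∀ a,
    ((lower i).trans (lower j)).trans (lower i) a = none := by
  intro i
  fin_cases i <;> decide +kernel

theorem ite_lower_sub_ite_lower : ∀ i a b,
    ((if b ∈ (lower i).trans (lower i).symm a then 1 else 0) -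
      (if b ∈ (lower i).symm.trans (lower i) a then 1 else 0) : ℤ) =
      if a = b then weight a i else 0 := by
  decide +kernel

section Minuscule

attribute [local instance] LieRing.ofAssociativeRing

variable (R : Type*) [CommRing R]

/-- The Cartan generators in the minuscule representation. -/
def minusculeH (i : Fin 6) : Matrix (Fin 27) (Fin 27) R := diagonal fun a ↦ (weight a i : R)

/-- The positive Chevalley generators in the (dual) minuscule representation. -/
def minusculeE (i : Fin 6) : Matrix (Fin 27) (Fin 27) R := (lower i).toMatrix

/-- The negative Chevalley generators in the (dual) minuscule representation. -/
def minusculeF (i : Fin 6) : Matrix (Fin 27) (Fin 27) R := (lower i).symm.toMatrix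

theorem transpose_minusculeE (i : Fin 6) : (minusculeE R i)ᵀ = minusculeF R i :=
  (PEquiv.toMatrix_symm _).symm

theorem transpose_minusculeH (i : Fin 6) : (minusculeH R i)ᵀ = minusculeH R i :=
  diagonal_transpose _

theorem lie_transpose (M N : Matrix (Fin 27) (Fin 27) R) : ⁅Mᵀ, Nᵀ⁆ = -⁅M, N⁆ᵀ := by
  simp [Ring.lie_def]

theorem lie_minusculeE (i j : Fin 6) (hij : E₆ i j = 0) :
    ⁅minusculeE R i, minusculeE R j⁆ = 0 := by
  rw [Ring.lie_def, minusculeE, minusculeE, ← PEquiv.toMatrix_trans, ← PEquiv.toMatrix_trans,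
    PEquiv.ext (lower_trans_comm i j hij), sub_self]

theorem lie_lie_minusculeE (i j : Fin 6) (hij : E₆ i j = -1) :
    ⁅minusculeE R i, ⁅minusculeE R i, minusculeE R j⁆⁆ = 0 := by
  have hii : minusculeE R i * minusculeE R i = 0 := by
    rw [minusculeE, ← PEquiv.toMatrix_trans, ← PEquiv.toMatrix_bot]
    exact congrArg _ (PEquiv.ext (lower_trans_lower i))
  have hiji : minusculeE R i * minusculeE R j * minusculeE R i = 0 := by
    rw [minusculeE, minusculeE, ← PEquiv.toMatrix_trans, ← PEquiv.toMatrix_trans,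
      ← PEquiv.toMatrix_bot]
    exact congrArg _ (PEquiv.ext (lower_trans_lower_trans_lower i j hij))
  simp only [Ring.lie_def, mul_sub, sub_mul, hiji, ← mul_assoc, hii]
  simp [mul_assoc, hii]

theorem lie_minusculeH_minusculeE (i j : Fin 6) :
    ⁅minusculeH R i, minusculeE R j⁆ = E₆ i j • minusculeE R j := by
  ext a b
  rw [Ring.lie_def, Matrix.sub_apply, minusculeH, diagonal_mul, mul_diagonal, Matrix.smul_apply,
    minusculeE, PEquiv.toMatrix_apply]
  split_ifs with hab
  · simp [← weight_of_mem_lower i j a b hab]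
  · simp

theorem isSerreSystem_minuscule :
    IsSerreSystem E₆ (minusculeH R) (minusculeE R) (minusculeF R) where
  lie_h_h i j := by
    simp [minusculeH, Ring.lie_def, diagonal_mul_diagonal, mul_comm]
  lie_e_f_same i := by
    ext a b
    rw [Ring.lie_def, Matrix.sub_apply, minusculeE, minusculeF, ← PEquiv.toMatrix_trans,
      ← PEquiv.toMatrix_trans, PEquiv.toMatrix_apply, PEquiv.toMatrix_apply, minusculeH,
      diagonal_apply]
    exact_mod_cast congrArg (Int.cast : ℤ → R) (ite_lower_sub_ite_lower i a b)
  lie_e_f_ne i j hij := by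
    rw [Ring.lie_def, minusculeE, minusculeF, ← PEquiv.toMatrix_trans, ← PEquiv.toMatrix_trans,
      PEquiv.ext (lower_trans_symm_comm i j hij), sub_self]
  lie_h_e := lie_minusculeH_minusculeE R
  lie_h_f i j := by
    rw [← transpose_minusculeE, ← transpose_minusculeH, lie_transpose,
      lie_minusculeH_minusculeE, transpose_smul]
  lie_e_e := lie_minusculeE R
  lie_f_f i j hij := by
    simp [← transpose_minusculeE, lie_transpose, lie_minusculeE R i j hij]
  lie_e_e_e := lie_lie_minusculeE R
  lie_f_f_f i j hij := by
    simp [← transpose_minusculeE, lie_transpose, lie_lie_minusculeE R i j hij]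

theorem minusculeE_ne_zero [Nontrivial R] (i : Fin 6) : minusculeE R i ≠ 0 := by
  obtain ⟨a, b, hab⟩ := exists_mem_lower i
  intro h
  simpa [minusculeE, PEquiv.toMatrix_apply, hab] using congrFun₂ h a b

theorem minusculeF_ne_zero [Nontrivial R] (i : Fin 6) : minusculeF R i ≠ 0 := by
  rw [← transpose_minusculeE, Ne, transpose_eq_zero]
  exact minusculeE_ne_zero R i

theorem generatorE_ne_zero [Nontrivial R] (i : Fin 6) : ToLieAlgebra.E R E₆ i ≠ 0 :=
  ToLieAlgebra.E_ne_zero R E₆ (isSerreSystem_minuscule R) E₆_diag isSimplyLaced_E₆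
    (minusculeE_ne_zero R i)

theorem generatorF_ne_zero [Nontrivial R] (i : Fin 6) : ToLieAlgebra.F R E₆ i ≠ 0 :=
  ToLieAlgebra.F_ne_zero R E₆ (isSerreSystem_minuscule R) E₆_diag isSimplyLaced_E₆
    (minusculeF_ne_zero R i)

end Minuscule

end CartanMatrix.E₆

/-- The exceptional Lie algebra `e₆(ℂ)` has dimension `78` over `ℂ`; equivalently, its
adjoint representation is `78`-dimensional. -/
theorem finrank_e6 : Module.finrank ℂ (LieAlgebra.e₆ ℂ) = 78 := by
  rw [IsSerreSystem.finrank_eq CartanMatrix.E₆.isSimplyLacedPosRoots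
    (Matrix.ToLieAlgebra.isSerreSystem ℂ CartanMatrix.E₆)
    (Matrix.ToLieAlgebra.eq_top_of_mem ℂ CartanMatrix.E₆)
    (CartanMatrix.E₆.generatorE_ne_zero ℂ) (CartanMatrix.E₆.generatorF_ne_zero ℂ)
    (by rw [CartanMatrix.E₆_det]; norm_num) CartanMatrix.E₆.separatingCoweight
    CartanMatrix.E₆.separatingCoweight_pos CartanMatrix.E₆.separatingCoweight_injOn,
    CartanMatrix.E₆.card_posRoots, Fintype.card_fin]
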